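/- Let ε > 0 and let Q be a privacy protocol satisfying ε-LDP, all of whose entries are positive and whose rank is a, and let μ be a Borel probability measure on the simplex 𝒫 having a continuous density, with p ↦ log det D_p and p ↦ log det G_p − Σ_{y=1}^b log((Qp)_y) μ-integrable. Then δ_μ(Q) ≥ (a−1) · log( √(2πe) / (e^ε − 1) ) − b·ε/2. -/

import Mathlib

/-!
The bound holds for the integrand at every `p` in the simplex. Put `r = Qp`.

For `det D_p`, pass to the basis of `ℝ^a` made of `p` and the edges `e_x - e_{x₀}`; this change of
basis is unimodular. `Q` sends `p` to `r` and the edge to `Q_x - Q_{x₀}`, and privacy gives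
`|Q_{y|x} - Q_{y|x₀}| ≤ (e^ε - 1) r_y`, so the diagonal of the transformed Gram matrix consists of
one entry `1` and `a - 1` entries at most `(e^ε - 1)²`. Conclude by Hadamard's inequality.

For `det G_p`, privacy gives `Q_{y|x} ≥ e^{-ε} r_y`. The quadratic form of `E_x` is a variance under
`Q_{·|x}`, that is, the least second moment about a point, so `E_x` dominates `e^{-ε}` times the
covariance matrix of `r` in the Loewner order, and so does the average `G_p` of the `E_x`. The
determinant is monotone, and the covariance matrix of `r` has determinant `∏ r_y`.
-/

open MeasureTheory Matrix Finset Filter Real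

noncomputable section

/-- The probability simplex in `ℝ^a`. -/
def simplex (a : ℕ) : Set (Fin a → ℝ) :=
  {p | (∀ x, 0 ≤ p x) ∧ ∑ x, p x = 1}

/-- Likelihood `L_y(p) = ∏ i, (Qp)_{y i}`. -/
def lik {a b n : ℕ} (Q : Matrix (Fin b) (Fin a) ℝ) (y : Fin n → Fin b)
    (p : Fin a → ℝ) : ℝ :=
  ∏ i, Q.mulVec p (y i)

/-- Mean squared error for distribution estimation. -/
def MSEdistr {a b n : ℕ} (Q : Matrix (Fin b) (Fin a) ℝ) (μ : Measure (Fin a → ℝ))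
    (Est : (Fin n → Fin b) → (Fin a → ℝ)) : ℝ :=
  ∑ y : (Fin n → Fin b), ∫ p, (∑ x, (p x - Est y x) ^ 2) * lik Q y p ∂μ

/-- The posterior-mean estimator for distribution estimation. -/
def PiOpt {a b n : ℕ} (Q : Matrix (Fin b) (Fin a) ℝ) (μ : Measure (Fin a → ℝ))
    (y : Fin n → Fin b) : Fin a → ℝ :=
  fun x => (∫ p, p x * lik Q y p ∂μ) / (∫ p, lik Q y p ∂μ)

/-- Empirical frequency vector of a data vector. -/
def freqVec {a n : ℕ} (xv : Fin n → Fin a) : Fin a → ℝ :=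
  fun α => ((Finset.univ.filter fun i => xv i = α).card : ℝ) / n

/-- Joint weight `w(x⃗,y⃗) = ∫ ∏ i, p_{x_i} Q_{y_i|x_i} dμ(p)`. -/
def wgt {a b n : ℕ} (Q : Matrix (Fin b) (Fin a) ℝ) (μ : Measure (Fin a → ℝ))
    (xv : Fin n → Fin a) (y : Fin n → Fin b) : ℝ :=
  ∫ p, (∏ i, p (xv i) * Q (y i) (xv i)) ∂μ

/-- Mean squared error for frequency estimation. -/
def MSEfreq {a b n : ℕ} (Q : Matrix (Fin b) (Fin a) ℝ) (μ : Measure (Fin a → ℝ))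
    (Est : (Fin n → Fin b) → (Fin a → ℝ)) : ℝ :=
  ∑ xv : (Fin n → Fin a), ∑ y : (Fin n → Fin b),
    wgt Q μ xv y * ∑ α, (freqVec xv α - Est y α) ^ 2

/-- The posterior-mean estimator for frequency estimation. -/
def PhiOpt {a b n : ℕ} (Q : Matrix (Fin b) (Fin a) ℝ) (μ : Measure (Fin a → ℝ))
    (y : Fin n → Fin b) : Fin a → ℝ :=
  fun α => (∑ xv : (Fin n → Fin a), wgt Q μ xv y * freqVec xv α) /
    (∑ xv : (Fin n → Fin a), wgt Q μ xv y)

/-- `P(φ, y⃗) = ∑_{x⃗ : F(x⃗) = φ} w(x⃗, y⃗)`. -/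
def Pphi {a b n : ℕ} (Q : Matrix (Fin b) (Fin a) ℝ) (μ : Measure (Fin a → ℝ))
    (φ : Fin a → ℝ) (y : Fin n → Fin b) : ℝ := by
  classical
  exact ∑ xv ∈ Finset.univ.filter (fun xv : Fin n → Fin a => freqVec xv = φ), wgt Q μ xv y

/-- Conditional Shannon entropy `H_n(F | Y⃗)` (terms with zero probability vanish since
`Real.log 0 = 0`). -/
def HFcond {a b : ℕ} (Q : Matrix (Fin b) (Fin a) ℝ) (μ : Measure (Fin a → ℝ))
    (n : ℕ) : ℝ := by
  classical
  exact -(∑ y : (Fin n → Fin b), ∑ φ ∈ Finset.image (freqVec (a := a) (n := n)) Finset.univ,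
      Pphi Q μ φ y * Real.log (Pphi Q μ φ y /
        ∑ φ' ∈ Finset.image (freqVec (a := a) (n := n)) Finset.univ, Pphi Q μ φ' y))

/-- The set `Δ = {q ∈ ℝ^m : q ≥ 0, ∑ q ≤ 1}`. -/
def stdCorner (m : ℕ) : Set (Fin m → ℝ) :=
  {q | (∀ i, 0 ≤ q i) ∧ ∑ i, q i ≤ 1}

/-- The identification `Δ ⊂ ℝ^{a-1} → 𝒫 ⊂ ℝ^a`,
`q ↦ (q_1, …, q_{a-1}, 1 - ∑ q_i)`. -/
def emb (a : ℕ) (q : Fin (a - 1) → ℝ) : Fin a → ℝ :=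
  fun x => if h : (x : ℕ) < a - 1 then q ⟨x.1, h⟩ else 1 - ∑ i, q i

/-- `μ` has density `f` (w.r.t. Lebesgue measure on `Δ`). -/
def IsDensity {a : ℕ} (μ : Measure (Fin a → ℝ)) (f : (Fin (a - 1) → ℝ) → ℝ) : Prop :=
  Measurable f ∧ (∀ q, 0 ≤ f q) ∧ (∫ q in stdCorner (a - 1), f q) = 1 ∧
  ∀ g : (Fin a → ℝ) → ℝ, Measurable g → (∃ C, ∀ p, |g p| ≤ C) →
    (∫ p, g p ∂μ) = ∫ q in stdCorner (a - 1), g (emb a q) * f q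

/-- `μ` has continuous density `f`. -/
def IsContDensity {a : ℕ} (μ : Measure (Fin a → ℝ)) (f : (Fin (a - 1) → ℝ) → ℝ) : Prop :=
  ContinuousOn f (stdCorner (a - 1)) ∧ (∀ q, 0 ≤ f q) ∧
  (∫ q in stdCorner (a - 1), f q) = 1 ∧
  ∀ g : (Fin a → ℝ) → ℝ, Measurable g → (∃ C, ∀ p, |g p| ≤ C) →
    (∫ p, g p ∂μ) = ∫ q in stdCorner (a - 1), g (emb a q) * f q

/-- Normalisation constant `C_{y⃗} = ∫_Δ f(q) L_{y⃗}(p(q)) dλ(q)`. -/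
def Cw {a b n : ℕ} (Q : Matrix (Fin b) (Fin a) ℝ) (f : (Fin (a - 1) → ℝ) → ℝ)
    (y : Fin n → Fin b) : ℝ :=
  ∫ q in stdCorner (a - 1), f q * lik Q y (emb a q)

/-- Posterior density `g_{y⃗}(q) = f(q) L_{y⃗}(p(q)) / C_{y⃗}`. -/
def gpost {a b n : ℕ} (Q : Matrix (Fin b) (Fin a) ℝ) (f : (Fin (a - 1) → ℝ) → ℝ)
    (y : Fin n → Fin b) (q : Fin (a - 1) → ℝ) : ℝ :=
  f q * lik Q y (emb a q) / Cw Q f y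

/-- Conditional differential entropy `h_n(P | Y⃗)`. -/
def hCond {a b : ℕ} (Q : Matrix (Fin b) (Fin a) ℝ) (f : (Fin (a - 1) → ℝ) → ℝ)
    (n : ℕ) : ℝ :=
  ∑ y : (Fin n → Fin b),
    Cw Q f y * (-(∫ q in stdCorner (a - 1), gpost Q f y q * Real.log (gpost Q f y q)))

/-- The matrix `D_p = Qᵀ · diag(Qp)⁻¹ · Q`. -/
def Dmat {a b : ℕ} (Q : Matrix (Fin b) (Fin a) ℝ) (p : Fin a → ℝ) :
    Matrix (Fin a) (Fin a) ℝ :=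
  Qᵀ * Matrix.diagonal (fun y => (Q.mulVec p y)⁻¹) * Q

/-- The constant `γ_μ(Q)`. -/
def gammaMu {a b : ℕ} (Q : Matrix (Fin b) (Fin a) ℝ) (μ : Measure (Fin a → ℝ)) : ℝ :=
  (((a : ℝ) - 1) / 2) * Real.log (2 * π * Real.exp 1) -
    (1 / 2) * ∫ p, Real.log (Dmat Q p).det ∂μ

/-- The truncated column `w_x = (Q_{1|x}, …, Q_{b-1|x})`. -/
def wcol {a b : ℕ} (Q : Matrix (Fin b) (Fin a) ℝ) (x : Fin a) : Fin (b - 1) → ℝ :=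
  fun y => Q ⟨y.1, lt_of_lt_of_le y.2 (Nat.sub_le b 1)⟩ x

/-- The matrix `E_x = diag(w_x) - w_x w_xᵀ`. -/
def Emat {a b : ℕ} (Q : Matrix (Fin b) (Fin a) ℝ) (x : Fin a) :
    Matrix (Fin (b - 1)) (Fin (b - 1)) ℝ :=
  Matrix.diagonal (wcol Q x) - Matrix.vecMulVec (wcol Q x) (wcol Q x)

/-- The matrix `G_p = ∑ x, p_x E_x`. -/
def Gmat {a b : ℕ} (Q : Matrix (Fin b) (Fin a) ℝ) (p : Fin a → ℝ) :
    Matrix (Fin (b - 1)) (Fin (b - 1)) ℝ :=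
  ∑ x, p x • Emat Q x

/-- The constant `δ_μ(Q)`. -/
def deltaMu {a b : ℕ} (Q : Matrix (Fin b) (Fin a) ℝ) (μ : Measure (Fin a → ℝ)) : ℝ :=
  gammaMu Q μ +
    (1 / 2) * ∫ p, (Real.log (Gmat Q p).det - ∑ y, Real.log (Q.mulVec p y)) ∂μ

/-- `Q` satisfies `ε`-local differential privacy. -/
def SatisfiesLDP {a b : ℕ} (Q : Matrix (Fin b) (Fin a) ℝ) (ε : ℝ) : Prop :=
  ∀ x x' : Fin a, ∀ y : Fin b, Q y x' ≤ Real.exp ε * Q y x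

section Determinant

variable {ι 𝕜 : Type*} [Fintype ι] [RCLike 𝕜] {A B M : Matrix ι ι 𝕜}

open scoped ComplexOrder MatrixOrder

lemma trace_mul_nonneg_of_posSemidef (hA : A.PosSemidef) (hB : B.PosSemidef) :
    0 ≤ (A * B).trace := by
  classical
  obtain ⟨S, rfl⟩ := CStarAlgebra.nonneg_iff_eq_star_mul_self.mp hB.nonneg
  rw [← Matrix.mul_assoc, trace_mul_comm, ← Matrix.mul_assoc, star_eq_conjTranspose]
  exact (hA.mul_mul_conjTranspose_same S).trace_nonneg

variable [DecidableEq ι]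

/-- AM-GM for the eigenvalues, in the form `∏ l i ≤ ∏ exp (l i - 1)`. -/
lemma det_le_one_of_trace_le_card (hM : M.PosSemidef) (htr : M.trace ≤ Fintype.card ι) :
    M.det ≤ 1 := by
  rw [hM.1.trace_eq_sum_eigenvalues] at htr
  rw [hM.1.det_eq_prod_eigenvalues]
  set l := hM.1.eigenvalues
  norm_cast at htr ⊢
  calc ∏ i, l i ≤ ∏ i, Real.exp (l i - 1) :=
        Finset.prod_le_prod (fun i _ => hM.eigenvalues_nonneg i) fun i _ => by
          linarith [Real.add_one_le_exp (l i - 1)]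
    _ = Real.exp (∑ i, l i - Fintype.card ι) := by simp [← Real.exp_sum]
    _ ≤ 1 := by simpa using htr

lemma det_le_det_of_trace_inv_mul_le_card (hA : A.PosSemidef) (hB : B.PosDef)
    (htr : (B⁻¹ * A).trace ≤ Fintype.card ι) : A.det ≤ B.det := by
  obtain ⟨S, hS⟩ := CStarAlgebra.nonneg_iff_eq_star_mul_self.mp hB.posSemidef.nonneg
  rw [star_eq_conjTranspose] at hS
  have hSdet : IsUnit S.det := by
    have hdet := hB.det_pos.ne'
    rw [hS, det_mul] at hdet
    exact (right_ne_zero_of_mul hdet).isUnit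
  have htrace : (S⁻¹ᴴ * A * S⁻¹).trace = (B⁻¹ * A).trace := by
    rw [trace_mul_comm, ← Matrix.mul_assoc, hS, Matrix.mul_inv_rev, conjTranspose_nonsing_inv]
  have hA_eq : A = Sᴴ * (S⁻¹ᴴ * A * S⁻¹) * S := by
    rw [Matrix.mul_assoc, nonsing_inv_mul_cancel_right _ _ hSdet, ← Matrix.mul_assoc,
      ← conjTranspose_mul, nonsing_inv_mul _ hSdet, conjTranspose_one, Matrix.one_mul]
  calc A.det = (S⁻¹ᴴ * A * S⁻¹).det * B.det := by
        conv_lhs => rw [hA_eq]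
        simp only [hS, det_mul]
        ring
    _ ≤ 1 * B.det := mul_le_mul_of_nonneg_right
        (det_le_one_of_trace_le_card (hA.conjTranspose_mul_mul_same S⁻¹) (htrace.trans_le htr))
        hB.det_pos.le
    _ = B.det := one_mul _

lemma det_le_prod_diag (hM : M.PosSemidef) : M.det ≤ ∏ i, M i i := by
  by_cases hdet : M.det = 0
  · exact hdet ▸ Finset.prod_nonneg fun i _ => hM.diag_nonneg
  have hdiag (i : ι) : 0 < M i i := (hM.posDef_iff_det_ne_zero.mpr hdet).diag_pos
  rw [← det_diagonal]
  refine det_le_det_of_trace_inv_mul_le_card hM (Matrix.PosDef.diagonal hdiag) (le_of_eq ?_)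
  simp [inv_diagonal, trace, Ring.inverse, (hdiag _).ne', isUnit_iff_ne_zero, Pi.isUnit_iff]

lemma det_le_det_of_posSemidef_sub (hA : A.PosSemidef) (hAB : (B - A).PosSemidef) :
    A.det ≤ B.det := by
  by_cases hdet : A.det = 0
  · have hB : B.PosSemidef := by simpa using hA.add hAB
    exact hdet ▸ hB.det_nonneg
  have hB : B.PosDef := by
    simpa using (hA.posDef_iff_det_ne_zero.mpr hdet).add_posSemidef hAB
  refine det_le_det_of_trace_inv_mul_le_card hA hB ?_
  have htr := trace_mul_nonneg_of_posSemidef hB.inv.posSemidef hAB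
  rwa [Matrix.mul_sub, nonsing_inv_mul _ hB.det_pos.ne'.isUnit, trace_sub, trace_one,
    sub_nonneg] at htr

end Determinant

section Simplex

variable {R α β : Type*} [Fintype α]

lemma sum_mulVec_eq_sum [CommSemiring R] [Fintype β] {Q : Matrix β α R}
    (hQ : ∀ x, ∑ y, Q y x = 1) (p : α → R) : ∑ y, (Q *ᵥ p) y = ∑ x, p x := by
  simp only [mulVec, dotProduct]
  rw [Finset.sum_comm]
  simp [← Finset.sum_mul, hQ]

variable [CommRing R] [LinearOrder R] [IsStrictOrderedRing R] {p u : α → R} {t : R}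

lemma le_dotProduct_of_mem_stdSimplex (hp : p ∈ stdSimplex R α) (hu : ∀ x, t ≤ u x) :
    t ≤ u ⬝ᵥ p :=
  calc t = ∑ x, t * p x := by rw [← Finset.mul_sum, hp.2, mul_one]
    _ ≤ u ⬝ᵥ p := Finset.sum_le_sum fun x _ => mul_le_mul_of_nonneg_right (hu x) (hp.1 x)

lemma dotProduct_le_of_mem_stdSimplex (hp : p ∈ stdSimplex R α) (hu : ∀ x, u x ≤ t) :
    u ⬝ᵥ p ≤ t := by
  simpa using le_dotProduct_of_mem_stdSimplex hp (u := -u) (t := -t) fun x => neg_le_neg (hu x)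

lemma dotProduct_pos_of_mem_stdSimplex (hp : p ∈ stdSimplex R α) (hu : ∀ x, 0 < u x) :
    0 < u ⬝ᵥ p := by
  obtain ⟨x, -, hx⟩ : ∃ x ∈ univ, p x ≠ 0 :=
    Finset.exists_ne_zero_of_sum_ne_zero (hp.2.trans_ne one_ne_zero)
  exact Finset.sum_pos' (fun x _ => mul_nonneg (hu x).le (hp.1 x))
    ⟨x, mem_univ x, mul_pos (hu x) ((hp.1 x).lt_of_ne' hx)⟩

end Simplex

section GramDeterminant

variable {R α β : Type*} [Fintype α] [DecidableEq α]

/-- The square matrix whose column `x ≠ x₀` is the edge `e_x - e_{x₀}` of the standard simplex and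
whose column `x₀` is `p`: a basis of `R^α` adapted to the point `p`, used to compute `det D_p`. -/
def edgeBasis [CommRing R] (p : α → R) (x₀ : α) : Matrix α α R :=
  of fun x x' => if x' = x₀ then p x else (Pi.single x' 1 - Pi.single x₀ 1 : α → R) x

/-- Adding all rows to row `x₀` turns that row into the unit vector `e_{x₀}`. -/
lemma det_edgeBasis [CommRing R] {p : α → R} (hp : ∑ x, p x = 1) (x₀ : α) :
    (edgeBasis p x₀).det = 1 := by
  have hrow : (edgeBasis p x₀).updateRow x₀ (∑ x, edgeBasis p x₀ x) =
      (1 : Matrix α α R).updateCol x₀ (Function.update p x₀ 1) := by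
    have hsum : ∑ x, edgeBasis p x₀ x = Pi.single x₀ 1 := by
      ext x'
      refine (Finset.sum_apply x' _ _).trans ?_
      by_cases hx' : x' = x₀ <;> simp [edgeBasis, hx', hp]
    rw [hsum]
    ext x x'
    by_cases hx : x = x₀ <;> by_cases hx' : x' = x₀ <;>
      simp [edgeBasis, updateRow_apply, one_apply, Pi.single_apply, hx, hx',
        eq_comm (a := x₀)]
  have hdet := det_updateRow_sum (edgeBasis p x₀) x₀ 1
  simp only [Pi.one_apply, one_smul] at hdet
  rw [← hdet, hrow, ← cramer_apply, cramer_one]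
  simp

lemma mul_edgeBasis_apply [CommRing R] (Q : Matrix β α R) (p : α → R) (x₀ : α)
    (y : β) (x : α) :
    (Q * edgeBasis p x₀) y x = if x = x₀ then (Q *ᵥ p) y else Q y x - Q y x₀ := by
  by_cases hx : x = x₀ <;>
    simp [mul_apply, edgeBasis, hx, mulVec, dotProduct, mul_sub, Pi.single_apply]

lemma det_gram_le_prod [Fintype β] [DecidableEq β] (B : Matrix β α ℝ) {w : β → ℝ} (hw : 0 ≤ w) :
    (Bᵀ * diagonal w * B).det ≤ ∏ x, ∑ y, w y * B y x ^ 2 := by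
  have hgram := (PosSemidef.diagonal hw).conjTranspose_mul_mul_same B
  rw [conjTranspose_eq_transpose_of_trivial] at hgram
  refine (det_le_prod_diag hgram).trans_eq (Finset.prod_congr rfl fun x _ => ?_)
  rw [mul_apply]
  refine Finset.sum_congr rfl fun y _ => ?_
  rw [mul_diagonal, transpose_apply]
  ring

end GramDeterminant

section CategoricalCovariance

variable {R ι : Type*} [CommRing R] [DecidableEq ι]

/-- The covariance matrix `diag(w) - w wᵀ` of a one-hot encoded random variable that takes the value
`i : ι` with probability `w i` and one further value, whose coordinate is dropped, with probability
`1 - ∑ i, w i`. -/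
def catCov (w : ι → R) : Matrix ι ι R :=
  diagonal w - vecMulVec w w

lemma isHermitian_catCov (w : ι → ℝ) : (catCov w).IsHermitian :=
  (isHermitian_diagonal w).sub <| by simp [IsHermitian]

variable [Fintype ι]

/-- The dropped outcome has `v`-coordinate `0`, hence the second moment `c ^ 2` about `c`. -/
lemma dotProduct_catCov_mulVec (w v : ι → R) (c : R) :
    v ⬝ᵥ catCov w *ᵥ v =
      ∑ i, w i * (v i - c) ^ 2 + (1 - ∑ i, w i) * c ^ 2 - (w ⬝ᵥ v - c) ^ 2 := by
  have hdiag : v ⬝ᵥ diagonal w *ᵥ v = ∑ i, w i * v i ^ 2 :=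
    Finset.sum_congr rfl fun i _ => by rw [mulVec_diagonal]; ring
  have hcenter : ∑ i, w i * (v i - c) ^ 2 =
      ∑ i, w i * v i ^ 2 - 2 * c * (w ⬝ᵥ v) + c ^ 2 * ∑ i, w i := by
    rw [dotProduct, Finset.mul_sum, Finset.mul_sum, ← Finset.sum_sub_distrib,
      ← Finset.sum_add_distrib]
    exact Finset.sum_congr rfl fun i _ => by ring
  rw [catCov, sub_mulVec, dotProduct_sub, hdiag, hcenter, vecMulVec_mulVec, dotProduct_smul,
    dotProduct_comm v w]
  simp only [MulOpposite.smul_eq_mul_unop, MulOpposite.unop_op]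
  ring

/-- A variance is the least second moment about a point: centre both forms at the mean under
`w'`. -/
lemma posSemidef_catCov_sub_smul {w w' : ι → ℝ} {k : ℝ} (hk : 0 ≤ k) (hw : ∀ i, k * w i ≤ w' i)
    (hw_compl : k * (1 - ∑ i, w i) ≤ 1 - ∑ i, w' i) : (catCov w' - k • catCov w).PosSemidef := by
  refine .of_dotProduct_mulVec_nonneg
    ((isHermitian_catCov w').sub ((isHermitian_catCov w).smul (.all k))) fun v => ?_
  set c := w' ⬝ᵥ v
  have hsum : k * ∑ i, w i * (v i - c) ^ 2 ≤ ∑ i, w' i * (v i - c) ^ 2 := by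
    rw [Finset.mul_sum]
    exact Finset.sum_le_sum fun i _ => by
      rw [← mul_assoc]; exact mul_le_mul_of_nonneg_right (hw i) (sq_nonneg _)
  rw [star_trivial, sub_mulVec, smul_mulVec, dotProduct_sub, dotProduct_smul, smul_eq_mul,
    dotProduct_catCov_mulVec w' v c, dotProduct_catCov_mulVec w v c]
  have hc := mul_le_mul_of_nonneg_right hw_compl (sq_nonneg c)
  have hmean : w' ⬝ᵥ v - c = 0 := sub_self c
  have hshift := mul_nonneg hk (sq_nonneg (w ⬝ᵥ v - c))
  rw [hmean]
  linarith

lemma det_catCov (w : ι → R) : (catCov w).det = (∏ i, w i) * (1 - ∑ i, w i) := by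
  have hfactor : catCov w =
      diagonal w * (1 + replicateCol Unit (-1 : ι → R) * replicateRow Unit w) := by
    ext i j
    rw [Matrix.mul_add, Matrix.mul_one, Matrix.add_apply, diagonal_mul]
    simp [catCov, vecMulVec_apply, mul_apply, sub_eq_add_neg]
  rw [hfactor, det_mul, det_diagonal, det_one_add_replicateCol_mul_replicateRow]
  simp [dotProduct, sub_eq_add_neg]

/-- The coordinates of `r` other than the last one; `wcol Q x` is `dropLast` of the column `x`
of `Q`. -/
def dropLast {b : ℕ} (r : Fin b → R) : Fin (b - 1) → R :=
  r ∘ Fin.castLE (Nat.sub_le b 1)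

lemma sum_dropLast {n : ℕ} (r : Fin (n + 1) → R) :
    ∑ i, dropLast r i = ∑ y, r y - r (Fin.last n) := by
  rw [Fin.sum_univ_castSucc, add_sub_cancel_right]
  rfl

lemma det_catCov_dropLast [Nontrivial R] {b : ℕ} {r : Fin b → R} (hr : ∑ y, r y = 1) :
    (catCov (dropLast r)).det = ∏ y, r y := by
  rcases b with - | n
  · simp at hr
  rw [det_catCov, sum_dropLast, hr, sub_sub_cancel, Fin.prod_univ_castSucc]
  rfl

lemma posSemidef_catCov_dropLast_sub_smul {b : ℕ} {r s : Fin b → ℝ} (hr : ∑ y, r y = 1)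
    (hs : ∑ y, s y = 1) {k : ℝ} (hk : 0 ≤ k) (hrs : ∀ y, k * r y ≤ s y) :
    (catCov (dropLast s) - k • catCov (dropLast r)).PosSemidef := by
  rcases b with - | n
  · simp at hr
  refine posSemidef_catCov_sub_smul hk (fun i => hrs _) ?_
  simpa only [sum_dropLast, hr, hs, sub_sub_cancel] using hrs (Fin.last n)

lemma posSemidef_catCov_dropLast {b : ℕ} {r : Fin b → ℝ} (hr : 0 ≤ r) (hsum : ∑ y, r y = 1) :
    (catCov (dropLast r)).PosSemidef := by
  simpa using posSemidef_catCov_dropLast_sub_smul hsum hsum le_rfl fun y => by simpa using hr y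

end CategoricalCovariance

section Privacy

variable {a b : ℕ} {Q : Matrix (Fin b) (Fin a) ℝ} {p : Fin a → ℝ} {ε : ℝ}

lemma SatisfiesLDP.abs_sub_le (hLDP : SatisfiesLDP Q ε) (hε : 0 ≤ ε) (y : Fin b)
    (x x' z : Fin a) : |Q y x - Q y x'| ≤ (Real.exp ε - 1) * Q y z := by
  have hexp : 0 ≤ Real.exp ε - 1 := sub_nonneg.mpr (Real.one_le_exp hε)
  have hsub (x x' : Fin a) : Q y x - Q y x' ≤ (Real.exp ε - 1) * Q y z := by
    rcases le_total (Q y x') (Q y z) with h | h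
    · linarith [hLDP x' x y, mul_le_mul_of_nonneg_left h hexp]
    · linarith [hLDP z x y]
  exact abs_sub_le_iff.mpr ⟨hsub x x', hsub x' x⟩

lemma SatisfiesLDP.abs_sub_le_mulVec (hLDP : SatisfiesLDP Q ε) (hε : 0 ≤ ε)
    (hp : p ∈ simplex a) (y : Fin b) (x x' : Fin a) :
    |Q y x - Q y x'| ≤ (Real.exp ε - 1) * (Q *ᵥ p) y := by
  have h := le_dotProduct_of_mem_stdSimplex hp (u := (Real.exp ε - 1) • Q y)
    fun z => hLDP.abs_sub_le hε y x x' z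
  rwa [smul_dotProduct, smul_eq_mul] at h

lemma SatisfiesLDP.mulVec_le (hLDP : SatisfiesLDP Q ε) (hp : p ∈ simplex a) (y : Fin b)
    (x : Fin a) : (Q *ᵥ p) y ≤ Real.exp ε * Q y x :=
  dotProduct_le_of_mem_stdSimplex hp fun x' => hLDP x x' y

lemma det_Dmat_pos (hrank : Q.rank = a) (hr : ∀ y, 0 < (Q *ᵥ p) y) : 0 < (Dmat Q p).det := by
  have hinj : Function.Injective Q.mulVec := by
    rw [mulVec_injective_iff, linearIndependent_iff_card_eq_finrank_span, Set.finrank,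
      ← rank_eq_finrank_span_cols, hrank, Fintype.card_fin]
  have hdiag := PosDef.diagonal fun y => inv_pos.mpr (hr y)
  simpa only [Dmat, conjTranspose_eq_transpose_of_trivial] using
    (hdiag.conjTranspose_mul_mul_same hinj).det_pos

lemma SatisfiesLDP.sum_inv_mul_sq_sub_le (hLDP : SatisfiesLDP Q ε) (hε : 0 ≤ ε)
    (hQ : ∀ x, ∑ y, Q y x = 1) (hp : p ∈ simplex a) (hr : ∀ y, 0 < (Q *ᵥ p) y) (x x' : Fin a) :
    ∑ y, ((Q *ᵥ p) y)⁻¹ * (Q y x - Q y x') ^ 2 ≤ (Real.exp ε - 1) ^ 2 :=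
  calc ∑ y, ((Q *ᵥ p) y)⁻¹ * (Q y x - Q y x') ^ 2
      ≤ ∑ y, ((Q *ᵥ p) y)⁻¹ * ((Real.exp ε - 1) * (Q *ᵥ p) y) ^ 2 :=
        Finset.sum_le_sum fun y _ => mul_le_mul_of_nonneg_left
          (sq_le_sq.mpr ((hLDP.abs_sub_le_mulVec hε hp y x x').trans (le_abs_self _)))
          (inv_pos.mpr (hr y)).le
    _ = (Real.exp ε - 1) ^ 2 * ∑ y, (Q *ᵥ p) y := by
        rw [Finset.mul_sum]
        exact Finset.sum_congr rfl fun y _ => by field_simp [(hr y).ne']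
    _ = (Real.exp ε - 1) ^ 2 := by rw [sum_mulVec_eq_sum hQ, hp.2, mul_one]

lemma SatisfiesLDP.det_Dmat_le (hLDP : SatisfiesLDP Q ε) (hε : 0 ≤ ε) (hQ : ∀ x, ∑ y, Q y x = 1)
    (hp : p ∈ simplex a) (hr : ∀ y, 0 < (Q *ᵥ p) y) :
    (Dmat Q p).det ≤ ((Real.exp ε - 1) ^ 2) ^ (a - 1) := by
  obtain ⟨x₀, -⟩ := Finset.exists_ne_zero_of_sum_ne_zero (hp.2.trans_ne one_ne_zero)
  set w : Fin b → ℝ := fun y => ((Q *ᵥ p) y)⁻¹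
  have hw : 0 ≤ w := fun y => (inv_pos.mpr (hr y)).le
  set U := edgeBasis p x₀
  have hUdet : U.det = 1 := det_edgeBasis hp.2 x₀
  have hgram : (Q * U)ᵀ * diagonal w * (Q * U) = Uᵀ * Dmat Q p * U := by
    simp only [Dmat, transpose_mul, Matrix.mul_assoc, w]
  calc (Dmat Q p).det = ((Q * U)ᵀ * diagonal w * (Q * U)).det := by
        rw [hgram, det_mul, det_mul, det_transpose, hUdet, one_mul, mul_one]
    _ ≤ ∏ x, ∑ y, w y * (Q * U) y x ^ 2 := det_gram_le_prod _ hw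
    _ ≤ ∏ x, if x = x₀ then 1 else (Real.exp ε - 1) ^ 2 := by
        refine Finset.prod_le_prod
          (fun x _ => Finset.sum_nonneg fun y _ => mul_nonneg (hw y) (sq_nonneg _)) fun x _ => ?_
        simp only [U, w, mul_edgeBasis_apply]
        split_ifs with hx
        · simp [sq, (hr _).ne', sum_mulVec_eq_sum hQ, hp.2]
        · exact hLDP.sum_inv_mul_sq_sub_le hε hQ hp hr x x₀
    _ = ((Real.exp ε - 1) ^ 2) ^ (a - 1) := by
        simp [Finset.prod_ite, Finset.filter_ne']

lemma SatisfiesLDP.posSemidef_Gmat_sub (hLDP : SatisfiesLDP Q ε) (hQ : ∀ x, ∑ y, Q y x = 1)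
    (hp : p ∈ simplex a) :
    (Gmat Q p - Real.exp (-ε) • catCov (dropLast (Q *ᵥ p))).PosSemidef := by
  have hsum : ∑ y, (Q *ᵥ p) y = 1 := (sum_mulVec_eq_sum hQ p).trans hp.2
  have hEmat (x : Fin a) : (Emat Q x - Real.exp (-ε) • catCov (dropLast (Q *ᵥ p))).PosSemidef :=
    posSemidef_catCov_dropLast_sub_smul hsum (hQ x) (Real.exp_pos _).le fun y => by
      rw [Real.exp_neg, inv_mul_le_iff₀ (Real.exp_pos ε)]
      exact hLDP.mulVec_le hp y x
  have havg : Gmat Q p - Real.exp (-ε) • catCov (dropLast (Q *ᵥ p)) =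
      ∑ x, p x • (Emat Q x - Real.exp (-ε) • catCov (dropLast (Q *ᵥ p))) := by
    simp only [Gmat, smul_sub, Finset.sum_sub_distrib, ← Finset.sum_smul, hp.2, one_smul]
  exact havg ▸ posSemidef_sum _ fun x _ => (hEmat x).smul (hp.1 x)

lemma SatisfiesLDP.le_det_Gmat (hLDP : SatisfiesLDP Q ε) (hQ : ∀ x, ∑ y, Q y x = 1)
    (hp : p ∈ simplex a) (hr : 0 ≤ Q *ᵥ p) :
    Real.exp (-ε) ^ (b - 1) * ∏ y, (Q *ᵥ p) y ≤ (Gmat Q p).det := by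
  have hsum : ∑ y, (Q *ᵥ p) y = 1 := (sum_mulVec_eq_sum hQ p).trans hp.2
  have hdet := det_le_det_of_posSemidef_sub
    ((posSemidef_catCov_dropLast hr hsum).smul (Real.exp_pos (-ε)).le)
    (hLDP.posSemidef_Gmat_sub hQ hp)
  rwa [det_smul, det_catCov_dropLast hsum, Fintype.card_fin] at hdet

lemma SatisfiesLDP.log_det_Dmat_le (hLDP : SatisfiesLDP Q ε) (hε : 0 ≤ ε)
    (hQ : ∀ x, ∑ y, Q y x = 1) (hrank : Q.rank = a) (hp : p ∈ simplex a)
    (hr : ∀ y, 0 < (Q *ᵥ p) y) :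
    Real.log (Dmat Q p).det ≤ 2 * ((a : ℝ) - 1) * Real.log (Real.exp ε - 1) := by
  obtain ⟨x₀, -⟩ := Finset.exists_ne_zero_of_sum_ne_zero (hp.2.trans_ne one_ne_zero)
  have hlog := Real.log_le_log (det_Dmat_pos hrank hr) (hLDP.det_Dmat_le hε hQ hp hr)
  rw [Real.log_pow, Real.log_pow, Nat.cast_pred x₀.pos] at hlog
  convert hlog using 1
  push_cast
  ring

lemma SatisfiesLDP.det_Gmat_pos (hLDP : SatisfiesLDP Q ε) (hQ : ∀ x, ∑ y, Q y x = 1)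
    (hp : p ∈ simplex a) (hr : ∀ y, 0 < (Q *ᵥ p) y) : 0 < (Gmat Q p).det :=
  (mul_pos (pow_pos (Real.exp_pos _) _) (Finset.prod_pos fun y _ => hr y)).trans_le
    (hLDP.le_det_Gmat hQ hp fun y => (hr y).le)

lemma SatisfiesLDP.le_log_det_Gmat_sub (hLDP : SatisfiesLDP Q ε) (hQ : ∀ x, ∑ y, Q y x = 1)
    (hp : p ∈ simplex a) (hr : ∀ y, 0 < (Q *ᵥ p) y) :
    -(((b : ℝ) - 1) * ε) ≤ Real.log (Gmat Q p).det - ∑ y, Real.log ((Q *ᵥ p) y) := by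
  obtain ⟨y₀, -⟩ := Finset.exists_ne_zero_of_sum_ne_zero
    (((sum_mulVec_eq_sum hQ p).trans hp.2).trans_ne one_ne_zero)
  have hprod : 0 < ∏ y, (Q *ᵥ p) y := Finset.prod_pos fun y _ => hr y
  have hexp : 0 < Real.exp (-ε) ^ (b - 1) := pow_pos (Real.exp_pos _) _
  have hlog := Real.log_le_log (mul_pos hexp hprod) (hLDP.le_det_Gmat hQ hp fun y => (hr y).le)
  rw [Real.log_mul hexp.ne' hprod.ne', Real.log_pow, Real.log_exp, Nat.cast_pred y₀.pos,
    Real.log_prod fun y _ => (hr y).ne'] at hlog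
  linarith

lemma continuousOn_log_det_Dmat (hrank : Q.rank = a) (hr : ∀ p ∈ simplex a, ∀ y, 0 < (Q *ᵥ p) y) :
    ContinuousOn (fun p => Real.log (Dmat Q p).det) (simplex a) := by
  refine ContinuousOn.log ?_ fun p hp => (det_Dmat_pos hrank (hr p hp)).ne'
  have hinv : ContinuousOn (fun p y => ((Q *ᵥ p) y)⁻¹) (simplex a) := by
    refine continuousOn_pi.mpr fun y => ContinuousOn.inv₀ ?_ fun p hp => (hr p hp y).ne'
    fun_prop
  rw [continuousOn_iff_continuous_domRestrict] at hinv ⊢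
  exact ((continuous_const.matrix_mul hinv.matrix_diagonal).matrix_mul continuous_const).matrix_det

lemma SatisfiesLDP.continuousOn_log_det_Gmat_sub (hLDP : SatisfiesLDP Q ε)
    (hQ : ∀ x, ∑ y, Q y x = 1) (hr : ∀ p ∈ simplex a, ∀ y, 0 < (Q *ᵥ p) y) :
    ContinuousOn (fun p => Real.log (Gmat Q p).det - ∑ y, Real.log ((Q *ᵥ p) y)) (simplex a) := by
  refine ContinuousOn.sub (ContinuousOn.log ?_ fun p hp => (hLDP.det_Gmat_pos hQ hp (hr p hp)).ne')
    (continuousOn_finsetSum _ fun y _ => ContinuousOn.log ?_ fun p hp => (hr p hp y).ne')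
  · have hG : Continuous (Gmat Q) := by
      unfold Gmat
      fun_prop
    exact hG.matrix_det.continuousOn
  · fun_prop

end Privacy

section Integration

variable {a : ℕ} {μ : Measure (Fin a → ℝ)}

lemma integrable_of_continuousOn_simplex [IsFiniteMeasure μ] (hμ : ∀ᵐ p ∂μ, p ∈ simplex a)
    {g : (Fin a → ℝ) → ℝ} (hg : ContinuousOn g (simplex a)) : Integrable g μ := by
  have hint : IntegrableOn g (simplex a) μ :=
    hg.integrableOn_compact (isCompact_stdSimplex ℝ (Fin a))
  rwa [IntegrableOn, Measure.restrict_eq_self_of_ae_mem hμ] at hint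

lemma emb_mem_simplex (ha : 0 < a) {q : Fin (a - 1) → ℝ} (hq : q ∈ stdCorner (a - 1)) :
    emb a q ∈ simplex a := by
  obtain ⟨m, rfl⟩ := Nat.exists_eq_add_of_le' ha
  refine ⟨fun x => ?_, ?_⟩
  · unfold emb
    split_ifs with h
    · exact hq.1 _
    · linarith [hq.2]
  · rw [Fin.sum_univ_castSucc]
    simp [emb]

lemma ae_mem_simplex (ha : 0 < a) [IsFiniteMeasure μ] {f : (Fin (a - 1) → ℝ) → ℝ}
    (hf : IsContDensity μ f) : ∀ᵐ p ∂μ, p ∈ simplex a := by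
  have hmeas : MeasurableSet (simplex a)ᶜ :=
    (isClosed_stdSimplex ℝ (Fin a)).measurableSet.compl
  have hzero : ∫ q in stdCorner (a - 1), (simplex a)ᶜ.indicator 1 (emb a q) * f q = 0 :=
    setIntegral_eq_zero_of_forall_eq_zero fun q hq => by simp [emb_mem_simplex ha hq]
  have hbounded (p : Fin a → ℝ) : |(simplex a)ᶜ.indicator (1 : (Fin a → ℝ) → ℝ) p| ≤ 1 := by
    by_cases hp : p ∈ simplex a <;> simp [hp]
  have htest := (hf.2.2.2 _ (measurable_one.indicator hmeas) ⟨1, hbounded⟩).trans hzero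
  rwa [integral_indicator_one hmeas, measureReal_eq_zero_iff] at htest

end Integration

theorem deltaMu_ge_LDP_bound_general {a b : ℕ} {Q : Matrix (Fin b) (Fin a) ℝ}
    (hQpos : ∀ y x, 0 < Q y x) (hQcol : ∀ x, ∑ y, Q y x = 1) (hrank : Q.rank = a)
    {μ : Measure (Fin a → ℝ)} [IsProbabilityMeasure μ] (hμ : ∀ᵐ p ∂μ, p ∈ simplex a)
    {ε : ℝ} (hε : 0 < ε) (hLDP : SatisfiesLDP Q ε) :
    ((a : ℝ) - 1) * Real.log (Real.sqrt (2 * π * Real.exp 1) / (Real.exp ε - 1)) -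
        ((b : ℝ) - 1) * ε / 2 ≤
      deltaMu Q μ := by
  have hr (p) (hp : p ∈ simplex a) (y : Fin b) : 0 < (Q *ᵥ p) y :=
    dotProduct_pos_of_mem_stdSimplex hp (hQpos y)
  have hD : ∫ p, Real.log (Dmat Q p).det ∂μ ≤ 2 * ((a : ℝ) - 1) * Real.log (Real.exp ε - 1) :=
    (convex_Iic _).integral_mem isClosed_Iic
      (hμ.mono fun p hp => hLDP.log_det_Dmat_le hε.le hQcol hrank hp (hr p hp))
      (integrable_of_continuousOn_simplex hμ (continuousOn_log_det_Dmat hrank hr))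
  have hG : -(((b : ℝ) - 1) * ε) ≤
      ∫ p, (Real.log (Gmat Q p).det - ∑ y, Real.log ((Q *ᵥ p) y)) ∂μ :=
    (convex_Ici _).integral_mem isClosed_Ici
      (hμ.mono fun p hp => hLDP.le_log_det_Gmat_sub hQcol hp (hr p hp))
      (integrable_of_continuousOn_simplex hμ (hLDP.continuousOn_log_det_Gmat_sub hQcol hr))
  have hexp : 0 < Real.exp ε - 1 := sub_pos.mpr (Real.one_lt_exp_iff.mpr hε)
  have hpi : 0 < 2 * π * Real.exp 1 := by positivity
  rw [Real.log_div (Real.sqrt_pos.mpr hpi).ne' hexp.ne', Real.log_sqrt hpi.le, deltaMu, gammaMu]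
  linarith

/-- lower bound on `δ_μ(Q)` via the LDP parameter `ε`. -/
theorem deltaMu_ge_LDP_bound {a b : ℕ} (ha : 2 ≤ a) (hb : 2 ≤ b)
    (Q : Matrix (Fin b) (Fin a) ℝ)
    (hQpos : ∀ y x, 0 < Q y x) (hQcol : ∀ x, ∑ y, Q y x = 1)
    (μ : Measure (Fin a → ℝ)) [IsProbabilityMeasure μ]
    (hrank : Q.rank = a)
    (f : (Fin (a - 1) → ℝ) → ℝ) (hf : IsContDensity μ f)
    (hint : Integrable (fun p => Real.log (Dmat Q p).det) μ)
    (hint2 : Integrable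
      (fun p => Real.log (Gmat Q p).det - ∑ y, Real.log (Q.mulVec p y)) μ)
    (ε : ℝ) (hε : 0 < ε) (hLDP : SatisfiesLDP Q ε) :
    ((a : ℝ) - 1) * Real.log (Real.sqrt (2 * π * Real.exp 1) / (Real.exp ε - 1)) -
        (b : ℝ) * ε / 2 ≤
      deltaMu Q μ := by
  have hsimplex := ae_mem_simplex (by omega) hf
  linarith [deltaMu_ge_LDP_bound_general hQpos hQcol hrank hsimplex hε hLDP]

end
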